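/- Let x ∈ L²(Ω, ℝᵐ) and let v_1, …, v_p ∈ L²(Ω, ℝⁿ) be pairwise orthonormal random vectors, i.e. 𝔼_{v_i v_j} = 0 for i ≠ j and 𝔼_{v_i v_i} = I for all i. Fix rank bounds η_1, …, η_p. For each k let α_{k1} ≥ α_{k2} ≥ ⋯ ≥ α_{kn} ≥ 0 be the singular values of 𝔼_{x v_k}. Then: (a) for every f ∈ ℝᵐ and all F_1, …, F_p ∈ ℝ^{m×n} with rank F_k ≤ η_k for each k, E[‖x − f − Σ_{k=1}^p F_k v_k‖²] ≥ tr(𝔼_{xx}) − Σ_{k=1}^p Σ_{j=1}^{η_k} α_{kj}²; and (b) this bound is attained: taking F_k⁰ to be a best rank-η_k approximation of 𝔼_{x v_k} (the truncated singular value decomposition retaining the η_k largest singular values) and f⁰ = E[x] − Σ_{k=1}^p F_k⁰ E[v_k], one has E[‖x − f⁰ − Σ_{k=1}^p F_k⁰ v_k‖²] = tr(𝔼_{xx}) − Σ_{k=1}^p Σ_{j=1}^{η_k} α_{kj}². -/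

import Mathlib

/-!
Splitting the mean square error of each coordinate into variance and squared bias, and using that
the coordinates of `v 1, …, v p` are uncorrelated with unit variance, gives
`errJ = tr 𝔼_xx + ∑ k, (‖F k‖² - 2⟨F k, 𝔼_{x v k}⟩) + ‖bias‖²` with Frobenius norms (`errJ_eq`).
The bias vanishes for the prescribed `f0`, and the problem decouples into one Eckart–Young
problem for each `k`.

For a single `M = ∑ j, α j • s j (d j)ᵀ` and `F` of rank at most `η`, let `P` be the orthogonal
projection to the range of `F`. Expanding in the basis `d` and completing squares,
`‖F‖² - 2⟨F, M⟩ ≥ -∑ j, α j ^ 2 * ‖P (s j)‖²`. The weights `‖P (s j)‖²` lie in `[0, 1]` and by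
Bessel's inequality add up to at most `η`, so the sum is at most that of the `η` largest `α j ^ 2`
(`eckart_young_lower`); truncation gives equality (`eckart_young_attained`).
-/


open MeasureTheory Matrix BigOperators

noncomputable def vmean {Ω : Type*} [MeasurableSpace Ω] {n : ℕ} (μ : Measure Ω)
    (g : Ω → Fin n → ℝ) : Fin n → ℝ :=
  fun i => ∫ ω, g ω i ∂μ

/-- Cross-covariance matrix `𝔼_{gh} = E[g hᵀ] - E[g] E[h]ᵀ`. -/
noncomputable def cov {Ω : Type*} [MeasurableSpace Ω] {m n : ℕ} (μ : Measure Ω)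
    (g : Ω → Fin m → ℝ) (h : Ω → Fin n → ℝ) : Matrix (Fin m) (Fin n) ℝ :=
  Matrix.of fun i j => (∫ ω, g ω i * h ω j ∂μ) - (∫ ω, g ω i ∂μ) * (∫ ω, h ω j ∂μ)

/-- `g ∈ L²(Ω, ℝⁿ)`: measurable with `E[‖g‖²] < ∞`. -/
def MemL2 {Ω : Type*} [MeasurableSpace Ω] {n : ℕ} (μ : Measure Ω)
    (g : Ω → Fin n → ℝ) : Prop :=
  Measurable g ∧ Integrable (fun ω => ∑ i, (g ω i) ^ 2) μ

/-- The error functional `J(f, F₁, …, F_p) = E[‖x - f - Σ_k F_k v_k‖²]`. -/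
noncomputable def errJ {Ω : Type*} [MeasurableSpace Ω] {m n p : ℕ} (μ : Measure Ω)
    (x : Ω → Fin m → ℝ) (v : Fin p → Ω → Fin n → ℝ) (f : Fin m → ℝ)
    (F : Fin p → Matrix (Fin m) (Fin n) ℝ) : ℝ :=
  ∫ ω, ∑ i, (x ω i - f i - ∑ k, (F k).mulVec (v k ω) i) ^ 2 ∂μ

/-- A weighted sum of decreasing squares, with weights in `[0, 1]` of total mass at most `η`,
is largest when the weights are the indicator of the first `η` indices. -/
lemma sum_sq_mul_weight_le {n : ℕ} (η : ℕ) (α w : Fin n → ℝ) (hα : Antitone α)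
    (hpos : ∀ j, 0 ≤ α j) (hw0 : ∀ j, 0 ≤ w j) (hw1 : ∀ j, w j ≤ 1)
    (hw : ∑ j, w j ≤ η) :
    ∑ j, α j ^ 2 * w j ≤ ∑ j ∈ Finset.univ.filter (fun j : Fin n => (j : ℕ) < η), α j ^ 2 := by
  rw [Finset.sum_filter]
  by_cases hη : η < n
  · -- The threshold `c = α_η ^ 2` separates the retained squares from the discarded ones.
    set c : ℝ := α ⟨η, hη⟩ ^ 2 with hc
    have hpt : ∀ j : Fin n, α j ^ 2 * w j ≤
        (if (j : ℕ) < η then α j ^ 2 else 0) + c * (w j - if (j : ℕ) < η then 1 else 0) := by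
      intro j
      split_ifs with h
      · have : c ≤ α j ^ 2 := pow_le_pow_left₀ (hpos _) (hα (Fin.le_def.2 h.le)) 2
        nlinarith [hw1 j, mul_nonneg (sub_nonneg.2 this) (sub_nonneg.2 (hw1 j))]
      · have : α j ^ 2 ≤ c := pow_le_pow_left₀ (hpos _) (hα (Fin.le_def.2 (not_lt.1 h))) 2
        nlinarith [mul_nonneg (sub_nonneg.2 this) (hw0 j)]
    have hcard : ∑ j : Fin n, (if (j : ℕ) < η then (1 : ℝ) else 0) = η := by
      rw [Finset.sum_boole]
      norm_cast
      have : (Finset.univ.filter fun j : Fin n => (j : ℕ) < η) = Finset.Iio ⟨η, hη⟩ := by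
        ext j; simp [Fin.lt_def]
      rw [this, Fin.card_Iio]
    calc _ ≤ _ := Finset.sum_le_sum fun j _ => hpt j
      _ ≤ _ := by
        rw [Finset.sum_add_distrib, ← Finset.mul_sum, Finset.sum_sub_distrib, hcard]
        have : 0 ≤ c := sq_nonneg _
        nlinarith
  · refine Finset.sum_le_sum fun j _ => ?_
    rw [if_pos (lt_of_lt_of_le j.2 (not_lt.1 hη))]
    exact mul_le_of_le_one_right (sq_nonneg _) (hw1 j)

/-- The Frobenius functional `‖F‖² - 2⟨F, M⟩`, for `M = ∑ j, α j • s j (d j)ᵀ` with `d` an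
orthonormal basis, computed on the vectors `F (d j)`. -/
lemma frobenius_eq_sum_basis {m n : ℕ} (s : Fin n → Fin m → ℝ) (d : Fin n → Fin n → ℝ)
    (α : Fin n → ℝ) (hd : ∀ j j', ∑ a, d j a * d j' a = if j = j' then (1 : ℝ) else 0)
    (F : Matrix (Fin m) (Fin n) ℝ) :
    ∑ i, ∑ a, (F i a ^ 2 - 2 * (F i a * (∑ j, α j • vecMulVec (s j) (d j)) i a)) =
      ∑ j, ((F *ᵥ d j) ⬝ᵥ (F *ᵥ d j) - 2 * (α j * (s j ⬝ᵥ (F *ᵥ d j)))) := by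
  -- The rows `d j` form an orthogonal matrix, so its columns are orthonormal as well.
  have hD : (Matrix.of d)ᵀ * Matrix.of d = 1 := by
    rw [mul_eq_one_comm]
    ext j j'
    simp [Matrix.mul_apply, hd, Matrix.one_apply]
  have hsq : ∑ j, (F *ᵥ d j) ⬝ᵥ (F *ᵥ d j) = ∑ i, ∑ a, F i a ^ 2 := by
    have h1 : ∑ j, (F *ᵥ d j) ⬝ᵥ (F *ᵥ d j)
        = trace ((F * (Matrix.of d)ᵀ) * (F * (Matrix.of d)ᵀ)ᵀ) := by
      simp only [trace, diag_apply, Matrix.mul_apply, transpose_apply, dotProduct, mulVec, of_apply]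
      exact Finset.sum_comm
    rw [h1, transpose_mul, transpose_transpose, Matrix.mul_assoc, ← Matrix.mul_assoc _ _ Fᵀ, hD,
      Matrix.one_mul]
    simp [trace, Matrix.mul_apply, sq]
  have hcross : ∑ i, ∑ a, F i a * (∑ j, α j • vecMulVec (s j) (d j)) i a =
      ∑ j, α j * (s j ⬝ᵥ (F *ᵥ d j)) := by
    simp only [Matrix.sum_apply, Matrix.smul_apply, vecMulVec_apply, smul_eq_mul, dotProduct,
      mulVec, Finset.mul_sum]
    rw [Finset.sum_congr rfl fun i _ => Finset.sum_comm, Finset.sum_comm]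
    refine Finset.sum_congr rfl fun j _ => Finset.sum_congr rfl fun i _ =>
      Finset.sum_congr rfl fun a _ => by ring
  simp only [Finset.sum_sub_distrib, ← Finset.mul_sum]
  rw [hsq, hcross]

/-- The lower bound of Eckart–Young. With `u` an orthonormal basis of the range of `F`, completing
the square in the coordinates of `F (d j)` leaves `-∑ α j ^ 2 * w j`, where `w j` is the squared
length of the projection of `s j` to the range. -/
lemma eckart_young_lower {m n : ℕ} (η : ℕ) (s : Fin n → Fin m → ℝ) (d : Fin n → Fin n → ℝ)
    (α : Fin n → ℝ) (hs : ∀ j j', ∑ a, s j a * s j' a = if j = j' then (1 : ℝ) else 0)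
    (hd : ∀ j j', ∑ a, d j a * d j' a = if j = j' then (1 : ℝ) else 0)
    (hα : Antitone α) (hpos : ∀ j, 0 ≤ α j)
    (F : Matrix (Fin m) (Fin n) ℝ) (hF : F.rank ≤ η) :
    -∑ j ∈ Finset.univ.filter (fun j : Fin n => (j : ℕ) < η), α j ^ 2 ≤
      ∑ i, ∑ a, (F i a ^ 2 - 2 * (F i a * (∑ j, α j • vecMulVec (s j) (d j)) i a)) := by
  rw [frobenius_eq_sum_basis s d α hd]
  let e := (WithLp.linearEquiv 2 ℝ (Fin m → ℝ)).symm
  let V : Submodule ℝ (EuclideanSpace ℝ (Fin m)) := (LinearMap.range F.mulVecLin).map e.toLinearMap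
  have hV : Module.finrank ℝ V ≤ η := by
    rw [LinearEquiv.finrank_map_eq]; exact hF
  let u := stdOrthonormalBasis ℝ V
  have hu : Orthonormal ℝ fun l => (u l : EuclideanSpace ℝ (Fin m)) :=
    u.orthonormal.comp_linearIsometry V.subtypeₗᵢ
  have hS : Orthonormal ℝ fun j => e (s j) := by
    rw [orthonormal_iff_ite]
    intro i j
    simp only [e, PiLp.inner_apply]
    simpa [mul_comm] using hs i j
  let w : Fin n → ℝ := fun j => ∑ l, inner ℝ (u l : EuclideanSpace ℝ (Fin m)) (e (s j)) ^ 2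
  have hw1 : ∀ j, w j ≤ 1 := fun j => by
    have := hu.sum_inner_products_le (s := Finset.univ) (e (s j))
    rw [hS.1 j] at this
    simpa [w] using this
  have hw : ∑ j, w j ≤ η := by
    simp only [w]
    rw [Finset.sum_comm]
    calc _ ≤ ∑ l : Fin (Module.finrank ℝ V), (1 : ℝ) := by
          refine Finset.sum_le_sum fun l _ => ?_
          have := hS.sum_inner_products_le (s := Finset.univ) (u l : EuclideanSpace ℝ (Fin m))
          rw [hu.1 l] at this
          simpa [real_inner_comm] using this
      _ ≤ _ := by simpa using hV
  have hkey := sum_sq_mul_weight_le η α w hα hpos (fun j => Finset.sum_nonneg fun _ _ => sq_nonneg _)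
    hw1 hw
  refine (neg_le_neg hkey).trans ?_
  rw [← Finset.sum_neg_distrib]
  refine Finset.sum_le_sum fun j _ => ?_
  let y : V := ⟨e (F *ᵥ d j), Submodule.mem_map_of_mem ⟨d j, rfl⟩⟩
  have hyy : (F *ᵥ d j) ⬝ᵥ (F *ᵥ d j) = ∑ l, inner ℝ (u l) y ^ 2 := by
    have h := u.sum_sq_norm_inner_right y
    simp only [Real.norm_eq_abs, sq_abs] at h
    rw [h, ← Submodule.norm_coe, EuclideanSpace.real_norm_sq_eq]
    simp [y, e, dotProduct, sq]
  have hsy : s j ⬝ᵥ (F *ᵥ d j) =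
      ∑ l, inner ℝ (u l) y * inner ℝ (u l : EuclideanSpace ℝ (Fin m)) (e (s j)) := by
    have h1 : s j ⬝ᵥ (F *ᵥ d j) = inner ℝ (y : EuclideanSpace ℝ (Fin m)) (e (s j)) := by
      simp [y, e, PiLp.inner_apply, dotProduct]
    have h2 : (y : EuclideanSpace ℝ (Fin m)) =
        ∑ l, (inner ℝ (u l) y) • (u l : EuclideanSpace ℝ (Fin m)) := by
      conv_lhs => rw [← u.sum_repr' y]
      simp
    rw [h1, h2, sum_inner]
    simp only [real_inner_smul_left]
  rw [hyy, hsy, ← sub_nonneg]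
  have : 0 ≤ ∑ l, (inner ℝ (u l) y -
      α j * inner ℝ (u l : EuclideanSpace ℝ (Fin m)) (e (s j))) ^ 2 :=
    Finset.sum_nonneg fun _ _ => sq_nonneg _
  refine this.trans_eq ?_
  simp only [w, Finset.mul_sum, ← Finset.sum_sub_distrib, ← Finset.sum_neg_distrib]
  exact Finset.sum_congr rfl fun l _ => by ring

/-- The truncated singular value decomposition attains the Eckart–Young bound. -/
lemma eckart_young_attained {m n : ℕ} (η : ℕ) (s : Fin n → Fin m → ℝ) (d : Fin n → Fin n → ℝ)
    (α : Fin n → ℝ) (hs : ∀ j j', ∑ a, s j a * s j' a = if j = j' then (1 : ℝ) else 0)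
    (hd : ∀ j j', ∑ a, d j a * d j' a = if j = j' then (1 : ℝ) else 0)
    (F : Matrix (Fin m) (Fin n) ℝ)
    (hF : F = ∑ j ∈ Finset.univ.filter (fun j : Fin n => (j : ℕ) < η),
      α j • vecMulVec (s j) (d j)) :
    ∑ i, ∑ a, (F i a ^ 2 - 2 * (F i a * (∑ j, α j • vecMulVec (s j) (d j)) i a)) =
      -∑ j ∈ Finset.univ.filter (fun j : Fin n => (j : ℕ) < η), α j ^ 2 := by
  rw [frobenius_eq_sum_basis s d α hd, Finset.sum_filter, ← Finset.sum_neg_distrib]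
  refine Finset.sum_congr rfl fun j _ => ?_
  have hFd : F *ᵥ d j = if (j : ℕ) < η then α j • s j else 0 := by
    have hterm : ∀ j' : Fin n, (α j' • vecMulVec (s j') (d j')) *ᵥ d j =
        if j' = j then α j' • s j' else 0 := by
      intro j'
      rw [Matrix.smul_mulVec, vecMulVec_mulVec]
      have : d j' ⬝ᵥ d j = if j' = j then 1 else 0 := hd j' j
      rw [this]
      split_ifs <;> simp
    rw [hF, Matrix.sum_mulVec, Finset.sum_congr rfl fun j' _ => hterm j', Finset.sum_ite_eq']
    simp
  have hss : s j ⬝ᵥ s j = 1 := by simpa [dotProduct] using hs j j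
  rw [hFd]
  split_ifs
  · simp only [smul_dotProduct, dotProduct_smul, hss, smul_eq_mul]; ring
  · simp

lemma MemL2.memLp {Ω : Type*} [MeasurableSpace Ω] {μ : Measure Ω} {n : ℕ}
    {g : Ω → Fin n → ℝ} (hg : MemL2 μ g) (i : Fin n) : MemLp (fun ω => g ω i) 2 μ := by
  have hm : Measurable fun ω => g ω i := (measurable_pi_apply i).comp hg.1
  rw [memLp_two_iff_integrable_sq hm.aestronglyMeasurable]
  refine hg.2.mono' (hm.pow_const 2).aestronglyMeasurable (ae_of_all _ fun ω => ?_)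
  rw [Real.norm_of_nonneg (sq_nonneg _)]
  exact Finset.single_le_sum (f := fun i => g ω i ^ 2) (fun _ _ => sq_nonneg _) (Finset.mem_univ i)

lemma cov_apply_eq {Ω : Type*} [MeasurableSpace Ω] {μ : Measure Ω} [IsProbabilityMeasure μ]
    {m n : ℕ} {g : Ω → Fin m → ℝ} {h : Ω → Fin n → ℝ} (hg : MemL2 μ g) (hh : MemL2 μ h)
    (i : Fin m) (j : Fin n) :
    ProbabilityTheory.covariance (fun ω => g ω i) (fun ω => h ω j) μ = cov μ g h i j := by
  rw [ProbabilityTheory.covariance_eq_sub (hg.memLp i) (hh.memLp j)]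
  rfl

/-- Mean square error of an affine predictor built on an orthonormal family of scalar variables:
squared bias plus variance. -/
lemma integral_affine_error_sq {Ω ι : Type*} [MeasurableSpace Ω] [Fintype ι] [DecidableEq ι]
    {μ : Measure Ω} [IsProbabilityMeasure μ] {X : Ω → ℝ} {Z : ι → Ω → ℝ}
    (hX : MemLp X 2 μ) (hZ : ∀ q, MemLp (Z q) 2 μ)
    (hZZ : ∀ q r, ProbabilityTheory.covariance (Z q) (Z r) μ = if q = r then 1 else 0)
    (f : ℝ) (c : ι → ℝ) :
    ∫ ω, (X ω - f - ∑ q, c q * Z q ω) ^ 2 ∂μ =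
      ProbabilityTheory.covariance X X μ
        + ∑ q, (c q ^ 2 - 2 * (c q * ProbabilityTheory.covariance X (Z q) μ))
        + (∫ ω, X ω ∂μ - f - ∑ q, c q * ∫ ω, Z q ω ∂μ) ^ 2 := by
  have hcZ : ∀ q, MemLp (fun ω => c q * Z q ω) 2 μ := fun q => (hZ q).const_mul (c q)
  have hS : MemLp (fun ω => ∑ q, c q * Z q ω) 2 μ := memLp_finsetSum _ fun q _ => hcZ q
  have hXf : MemLp (fun ω => X ω - f) 2 μ := hX.sub (memLp_const f)
  have hY : MemLp (fun ω => X ω - f - ∑ q, c q * Z q ω) 2 μ := hXf.sub hS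
  have hmean : ∫ ω, (X ω - f - ∑ q, c q * Z q ω) ∂μ =
      ∫ ω, X ω ∂μ - f - ∑ q, c q * ∫ ω, Z q ω ∂μ := by
    rw [integral_sub (hXf.integrable one_le_two) (hS.integrable one_le_two),
      integral_sub (hX.integrable one_le_two) (integrable_const f),
      integral_finsetSum _ fun q _ => (hcZ q).integrable one_le_two]
    simp [integral_const_mul]
  have hXint := hX.integrable one_le_two
  have hvar := ProbabilityTheory.variance_eq_sub hY
  rw [ProbabilityTheory.variance_fun_sub hXf hS,
    ProbabilityTheory.variance_sub_const hX.aestronglyMeasurable,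
    ProbabilityTheory.covariance_sub_const_left hXint,
    ProbabilityTheory.covariance_fun_sum_right hcZ hX,
    ProbabilityTheory.variance_fun_sum hcZ, hmean,
    ← ProbabilityTheory.covariance_self hX.aemeasurable] at hvar
  simp only [ProbabilityTheory.covariance_const_mul_left,
    ProbabilityTheory.covariance_const_mul_right, hZZ, Pi.pow_apply] at hvar
  simp only [mul_ite, mul_one, mul_zero, Finset.sum_ite_eq, Finset.mem_univ, if_true] at hvar
  rw [← sub_eq_iff_eq_add, ← hvar, Finset.sum_sub_distrib, ← Finset.mul_sum]
  simp only [sq]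
  ring

/-- Decomposition of the error functional: total variance, one Frobenius functional for each
block `F k`, and the squared bias. -/
lemma errJ_eq {Ω : Type*} [MeasurableSpace Ω] (μ : Measure Ω) [IsProbabilityMeasure μ]
    {m n p : ℕ} (x : Ω → Fin m → ℝ) (hx : MemL2 μ x)
    (v : Fin p → Ω → Fin n → ℝ) (hv : ∀ k, MemL2 μ (v k))
    (horth : ∀ i j, i ≠ j → cov μ (v i) (v j) = 0)
    (hnorm : ∀ i, cov μ (v i) (v i) = 1)
    (f : Fin m → ℝ) (F : Fin p → Matrix (Fin m) (Fin n) ℝ) :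
    errJ μ x v f F = trace (cov μ x x)
      + ∑ k, ∑ i, ∑ a, (F k i a ^ 2 - 2 * (F k i a * cov μ x (v k) i a))
      + ∑ i, (vmean μ x - f - ∑ k, F k *ᵥ vmean μ (v k)) i ^ 2 := by
  let Z : Fin p × Fin n → Ω → ℝ := fun q ω => v q.1 ω q.2
  have hZ : ∀ q, MemLp (Z q) 2 μ := fun q => (hv q.1).memLp q.2
  have hZZ : ∀ q r, ProbabilityTheory.covariance (Z q) (Z r) μ = if q = r then 1 else 0 := by
    rintro ⟨k, a⟩ ⟨k', a'⟩
    refine (cov_apply_eq (hv k) (hv k') a a').trans ?_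
    by_cases h : k = k'
    · subst h; simp [hnorm, Matrix.one_apply]
    · simp [horth k k' h, h]
  have hsum : ∀ ω i, ∑ k, (F k).mulVec (v k ω) i = ∑ q : Fin p × Fin n, F q.1 i q.2 * Z q ω := by
    intro ω i
    rw [Fintype.sum_prod_type]
    rfl
  have hrow := fun i => integral_affine_error_sq (hx.memLp i) hZ hZZ (f i) fun q => F q.1 i q.2
  have hint : ∀ i, Integrable (fun ω => (x ω i - f i - ∑ q, F q.1 i q.2 * Z q ω) ^ 2) μ := fun i =>
    (((hx.memLp i).sub (memLp_const (f i))).sub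
      (memLp_finsetSum _ fun q _ => (hZ q).const_mul (F q.1 i q.2))).integrable_sq
  unfold errJ
  simp only [hsum]
  rw [integral_finsetSum _ fun i _ => hint i, Finset.sum_congr rfl fun i _ => hrow i,
    Finset.sum_add_distrib, Finset.sum_add_distrib]
  congr 1
  · congr 1
    · exact Finset.sum_congr rfl fun i _ => cov_apply_eq hx hx i i
    · rw [Finset.sum_comm, Fintype.sum_prod_type]
      refine Finset.sum_congr rfl fun k _ => ?_
      rw [Finset.sum_comm]
      refine Finset.sum_congr rfl fun i _ => Finset.sum_congr rfl fun a _ => ?_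
      rw [← cov_apply_eq hx (hv k)]
  · refine Finset.sum_congr rfl fun i _ => ?_
    rw [Fintype.sum_prod_type]
    simp [vmean, mulVec, dotProduct, Z]

theorem optimal_rank_constrained_orthonormal
    {Ω : Type*} [MeasurableSpace Ω] (μ : Measure Ω) [IsProbabilityMeasure μ]
    {m n p : ℕ} (x : Ω → Fin m → ℝ) (hx : MemL2 μ x)
    (v : Fin p → Ω → Fin n → ℝ) (hv : ∀ k, MemL2 μ (v k))
    (horth : ∀ i j, i ≠ j → cov μ (v i) (v j) = 0)
    (hnorm : ∀ i, cov μ (v i) (v i) = 1)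
    (η : Fin p → ℕ)
    (s : Fin p → Fin n → Fin m → ℝ) (d : Fin p → Fin n → Fin n → ℝ)
    (α : Fin p → Fin n → ℝ)
    (hs : ∀ k j j', ∑ a, s k j a * s k j' a = if j = j' then (1 : ℝ) else 0)
    (hd : ∀ k j j', ∑ a, d k j a * d k j' a = if j = j' then (1 : ℝ) else 0)
    (hmono : ∀ k, Antitone (α k)) (hpos : ∀ k j, 0 ≤ α k j)
    (hsvd : ∀ k, cov μ x (v k) = ∑ j, α k j • Matrix.vecMulVec (s k j) (d k j))
    (F0 : Fin p → Matrix (Fin m) (Fin n) ℝ)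
    (hF0 : ∀ k, F0 k = ∑ j ∈ Finset.univ.filter (fun j : Fin n => (j : ℕ) < η k),
        α k j • Matrix.vecMulVec (s k j) (d k j))
    (f0 : Fin m → ℝ)
    (hf0 : f0 = vmean μ x - ∑ k, (F0 k).mulVec (vmean μ (v k))) :
    (∀ (f : Fin m → ℝ) (F : Fin p → Matrix (Fin m) (Fin n) ℝ),
      (∀ k, (F k).rank ≤ η k) →
      errJ μ x v f F ≥ Matrix.trace (cov μ x x)
        - ∑ k, ∑ j ∈ Finset.univ.filter (fun j : Fin n => (j : ℕ) < η k), (α k j) ^ 2) ∧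
    errJ μ x v f0 F0 = Matrix.trace (cov μ x x)
        - ∑ k, ∑ j ∈ Finset.univ.filter (fun j : Fin n => (j : ℕ) < η k), (α k j) ^ 2 := by
  have hJ := errJ_eq μ x hx v hv horth hnorm
  constructor
  · intro f F hF
    rw [hJ f F, ge_iff_le, sub_eq_add_neg, ← Finset.sum_neg_distrib]
    have h1 := Finset.sum_le_sum fun k (_ : k ∈ Finset.univ) =>
      eckart_young_lower (η k) (s k) (d k) (α k) (hs k) (hd k) (hmono k) (hpos k) (F k) (hF k)
    simp only [← hsvd] at h1
    have h2 : 0 ≤ ∑ i, (vmean μ x - f - ∑ k, F k *ᵥ vmean μ (v k)) i ^ 2 :=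
      Finset.sum_nonneg fun _ _ => sq_nonneg _
    linarith
  · have hbias : vmean μ x - f0 - ∑ k, F0 k *ᵥ vmean μ (v k) = 0 := by
      rw [hf0]; abel
    rw [hJ f0 F0, hbias, sub_eq_add_neg, ← Finset.sum_neg_distrib]
    have h1 := fun k => eckart_young_attained (η k) (s k) (d k) (α k) (hs k) (hd k) (F0 k) (hF0 k)
    simp only [← hsvd] at h1
    rw [Finset.sum_congr rfl fun k _ => h1 k]
    simp
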